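/- arXiv:1411.3553 — 4 statements merged into one kernel-verified Lean document; each statement's English description precedes it below -/
import Mathlib

section
/- Let r, B > 0 and suppose f_ρ belongs to L1^r with norm at most B, witnessed by h_ρ = Σ_{i=1}^n a_i g_i ∈ span(D_n) with Σ_i |a_i| ≤ B and ‖f_ρ − h_ρ‖_∞ ≤ B n^{-r}. Define f_0* = 0 and, for k ≥ 1, f_k* = (1 − 1/k) f_{k−1}* + (Σ_{i=1}^n |a_i| ‖g_i‖_ρ / k) g_k*, where g_k* maximizes ⟨h_ρ − (1 − 1/k) f_{k−1}*, g⟩_ρ over the symmetrized normalized dictionary D_n' = { ± g_i/‖g_i‖_ρ : 1 ≤ i ≤ n }. Then for every k ≥ 1, E(f_k*) − E(f_ρ) = ‖f_k* − f_ρ‖_ρ² ≤ B² ( k^{-1/2} + n^{-r} )². -/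
open MeasureTheory

noncomputable section

/-- The generalization error `E(f) = ∫_Z (f x - y)² dρ`. -/
def genErr {X : Type*} [MeasurableSpace X] (ρ : Measure (X × ℝ)) (f : X → ℝ) : ℝ :=
  ∫ p, (f p.1 - p.2) ^ 2 ∂ρ

/-- The `L²(μ)` inner product `⟨f, g⟩_ρ = ∫ f g dμ`. -/
def innerRho {X : Type*} [MeasurableSpace X] (μ : Measure X) (f g : X → ℝ) : ℝ :=
  ∫ x, f x * g x ∂μ

/-- The `L²(μ)` norm `‖f‖_ρ`. -/
def normRho {X : Type*} [MeasurableSpace X] (μ : Measure X) (f : X → ℝ) : ℝ :=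
  Real.sqrt (innerRho μ f f)

/-- The symmetrized normalized dictionary `D_n' = { ± g_i / ‖g_i‖_ρ }`. -/
def symDict {X : Type*} [MeasurableSpace X] (μ : Measure X) {n : ℕ} (D : Fin n → X → ℝ) :
    Set (X → ℝ) :=
  {g : X → ℝ | ∃ i : Fin n,
    g = (fun x => D i x / normRho μ (D i)) ∨ g = fun x => -(D i x) / normRho μ (D i)}

/-- Abstract relaxed greedy estimate in a real inner product space. -/
lemma rga_step {E : Type*} [NormedAddCommGroup E] [InnerProductSpace ℝ E]
    (h f u : E) (A k : ℝ) (hk : 1 ≤ k) (hu : ‖u‖ = 1)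
    (hmax : inner ℝ (h - (1 - 1 / k) • f) h ≤ A * inner ℝ (h - (1 - 1 / k) • f) u) :
    ‖h - ((1 - 1 / k) • f + (A / k) • u)‖ ^ 2 ≤ (1 - 1 / k) ^ 2 * ‖h - f‖ ^ 2 + A ^ 2 / k ^ 2 := by
  have hk0 : 0 < k := by linarith
  set e := h - (1 - 1 / k) • f with he
  have h1 : h - ((1 - 1 / k) • f + (A / k) • u) = e - (A / k) • u := by rw [he]; abel
  have h2 : (1 - 1 / k) • (h - f) = e - (1 / k) • h := by rw [he]; module
  have h3 : (1 - 1 / k) ^ 2 * ‖h - f‖ ^ 2 = ‖e - (1 / k) • h‖ ^ 2 := by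
    rw [← h2, norm_smul, mul_pow, Real.norm_eq_abs, sq_abs]
  rw [h1, h3, norm_sub_sq_real e, norm_sub_sq_real e, norm_smul, norm_smul, inner_smul_right,
    inner_smul_right, hu, mul_pow, mul_pow, Real.norm_eq_abs, sq_abs, Real.norm_eq_abs, sq_abs]
  have h4 : (1 / k) * inner ℝ e h ≤ (1 / k) * (A * inner ℝ e u) :=
    mul_le_mul_of_nonneg_left hmax (by positivity)
  have h5 : A / k * inner ℝ e u = (1 / k) * (A * inner ℝ e u) := by ring
  have h6 : 0 ≤ (1 / k) ^ 2 * ‖h‖ ^ 2 := by positivity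
  rw [h5, div_pow]
  linarith

lemma rga_rate (A : ℝ) (b : ℕ → ℝ)
    (hb : ∀ k : ℕ, 1 ≤ k → b k ≤ (1 - 1 / (k : ℝ)) ^ 2 * b (k - 1) + A ^ 2 / (k : ℝ) ^ 2) :
    ∀ k : ℕ, 1 ≤ k → b k ≤ A ^ 2 / k := by
  intro k hk
  induction k, hk using Nat.le_induction with
  | base => simpa using hb 1 le_rfl
  | succ m hm ih =>
    have := hb (m + 1) (by omega)
    simp only [Nat.add_sub_cancel] at this
    have hm0 : (0 : ℝ) < m := by exact_mod_cast hm
    have h2 := mul_le_mul_of_nonneg_left ih (sq_nonneg (1 - 1 / ((m + 1 : ℕ) : ℝ)))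
    refine this.trans ((add_le_add_left h2 _).trans (le_of_eq ?_))
    push_cast
    field_simp
    ring

lemma rga_normRho_eq {X : Type*} [MeasurableSpace X] (μ : Measure X) (f : X → ℝ)
    (v : Lp ℝ 2 μ) (hv : v =ᵐ[μ] f) : normRho μ f = ‖v‖ := by
  rw [normRho, innerRho, norm_eq_sqrt_real_inner, L2.inner_def]
  congr 1
  apply integral_congr_ae
  filter_upwards [hv] with x hx
  simp [hx, sq]

lemma rga_ae_fst {X : Type*} [MeasurableSpace X] (ρ : Measure (X × ℝ)) [IsProbabilityMeasure ρ]
    (P : X → Prop) (h : ∀ᵐ p ∂ρ, P p.1) : ∀ᵐ x ∂(ρ.map Prod.fst), P x := by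
  change ∀ᵐ x ∂ρ.fst, P x
  rw [← ρ.disintegrate ρ.condKernel] at h
  have := Measure.ae_ae_of_ae_compProd h
  filter_upwards [this] with x hx
  exact hx.exists.choose_spec

/-- The regression function is a.e. strongly measurable with respect to the marginal. -/
lemma rga_aesm {X : Type*} [MeasurableSpace X] (ρ : Measure (X × ℝ)) [IsProbabilityMeasure ρ]
    (fρ : X → ℝ) (hreg : (fun p : X × ℝ => fρ p.1) =ᵐ[ρ]
      ρ[(fun p : X × ℝ => p.2)|MeasurableSpace.comap (Prod.fst : X × ℝ → X) inferInstance]) :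
    AEStronglyMeasurable fρ (ρ.map Prod.fst) := by
  obtain ⟨φ, hφ, hφ'⟩ := (stronglyMeasurable_condExp (μ := ρ) (f := fun p : X × ℝ => p.2)
    (m := MeasurableSpace.comap (Prod.fst : X × ℝ → X) inferInstance)).measurable.exists_eq_measurable_comp
  refine ⟨φ, hφ.stronglyMeasurable, rga_ae_fst ρ (fun x => fρ x = φ x) ?_⟩
  filter_upwards [hreg] with p hp
  rw [hp, hφ']
  rfl

lemma rga_genErr {X : Type*} [MeasurableSpace X] (ρ : Measure (X × ℝ)) [IsProbabilityMeasure ρ]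
    (M : ℝ) (hy : ∀ᵐ p ∂ρ, |p.2| ≤ M) (fρ : X → ℝ)
    (hreg : (fun p : X × ℝ => fρ p.1) =ᵐ[ρ]
      ρ[(fun p : X × ℝ => p.2)|MeasurableSpace.comap (Prod.fst : X × ℝ → X) inferInstance])
    (C : ℝ) (hC : ∀ x, |fρ x| ≤ C) (f : X → ℝ) (hf : Measurable f) (C' : ℝ)
    (hC' : ∀ x, |f x| ≤ C') :
    genErr ρ f - genErr ρ fρ = normRho (ρ.map Prod.fst) (fun x => f x - fρ x) ^ 2 := by
  have hm : MeasurableSpace.comap (Prod.fst : X × ℝ → X) inferInstance ≤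
    (inferInstance : MeasurableSpace (X × ℝ)) := measurable_fst.comap_le
  have haf := rga_aesm ρ fρ hreg
  have hafρ : AEStronglyMeasurable (fun p : X × ℝ => fρ p.1) ρ :=
    haf.comp_measurable measurable_fst
  have hGm : AEStronglyMeasurable[MeasurableSpace.comap (Prod.fst : X × ℝ → X) inferInstance]
      (fun p : X × ℝ => f p.1 - fρ p.1) ρ := by
    have h1 : StronglyMeasurable[MeasurableSpace.comap (Prod.fst : X × ℝ → X) inferInstance]
      (fun p : X × ℝ => f p.1) :=
      (hf.comp (comap_measurable (Prod.fst : X × ℝ → X))).stronglyMeasurable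
    exact h1.aestronglyMeasurable.sub ⟨_, stronglyMeasurable_condExp, hreg⟩
  have hGb : ∀ p : X × ℝ, ‖f p.1 - fρ p.1‖ ≤ C' + C := fun p =>
    (norm_sub_le _ _).trans (add_le_add (hC' _) (hC _))
  have hGmem : MemLp (fun p : X × ℝ => f p.1 - fρ p.1) ⊤ ρ :=
    memLp_top_of_bound (hGm.mono hm) _ (ae_of_all _ hGb)
  have hymem : MemLp (fun p : X × ℝ => p.2) ⊤ ρ :=
    memLp_top_of_bound measurable_snd.aestronglyMeasurable M hy
  have hfρmem : MemLp (fun p : X × ℝ => fρ p.1) ⊤ ρ :=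
    memLp_top_of_bound hafρ C (ae_of_all _ fun p => hC _)
  have hyi : Integrable (fun p : X × ℝ => p.2) ρ := hymem.integrable le_top
  have hGy : Integrable ((fun p : X × ℝ => f p.1 - fρ p.1) * (fun p : X × ℝ => p.2)) ρ :=
    hyi.bdd_mul (hGm.mono hm) (ae_of_all _ hGb)
  have hGf : Integrable ((fun p : X × ℝ => f p.1 - fρ p.1) * (fun p : X × ℝ => fρ p.1)) ρ :=
    (hfρmem.integrable le_top).bdd_mul (hGm.mono hm) (ae_of_all _ hGb)
  have hGG : Integrable (fun p : X × ℝ => (f p.1 - fρ p.1) * (f p.1 - fρ p.1)) ρ :=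
    (hGmem.integrable le_top).bdd_mul (hGm.mono hm) (ae_of_all _ hGb)
  have key : ∫ p, ((fun p : X × ℝ => f p.1 - fρ p.1) * (fun p : X × ℝ => p.2)) p ∂ρ =
      ∫ p, ((fun p : X × ℝ => f p.1 - fρ p.1) * (fun p : X × ℝ => fρ p.1)) p ∂ρ := by
    rw [← integral_condExp hm]
    apply integral_congr_ae
    filter_upwards [condExp_mul_of_aestronglyMeasurable_left hGm hGy hyi, hreg] with p h1 h2
    rw [h1, Pi.mul_apply, Pi.mul_apply, ← h2]
  have hres : MemLp (fun p : X × ℝ => fρ p.1 - p.2) ⊤ ρ := hfρmem.sub hymem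
  have hres2 : Integrable (fun p : X × ℝ => (fρ p.1 - p.2) ^ 2) ρ :=
    (hres.mono_exponent le_top : MemLp _ 2 ρ).integrable_sq
  have hsq : normRho (ρ.map Prod.fst) (fun x => f x - fρ x) ^ 2 =
      ∫ p, (f p.1 - fρ p.1) * (f p.1 - fρ p.1) ∂ρ := by
    rw [normRho, innerRho, Real.sq_sqrt (integral_nonneg fun x => mul_self_nonneg _)]
    have h0 := hf.aestronglyMeasurable (μ := ρ.map Prod.fst) |>.sub haf
    exact integral_map measurable_fst.aemeasurable (h0.mul h0)
  rw [hsq, genErr, genErr]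
  have e : (fun p : X × ℝ => (f p.1 - p.2) ^ 2) = fun p =>
    ((fρ p.1 - p.2) ^ 2 + (f p.1 - fρ p.1) * (f p.1 - fρ p.1)) +
     2 * (((fun p : X × ℝ => f p.1 - fρ p.1) * (fun p : X × ℝ => fρ p.1)) p -
      ((fun p : X × ℝ => f p.1 - fρ p.1) * (fun p : X × ℝ => p.2)) p) := by
    funext p; simp only [Pi.mul_apply]; ring
  have e1 := integral_add (hres2.add hGG) ((hGf.sub hGy).const_mul 2)
  simp only [Pi.add_apply, Pi.sub_apply] at e1
  rw [e, e1, integral_const_mul, integral_sub hGf hGy, integral_add hres2 hGG, key]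
  ring

/-- **Approximation error of the relaxed greedy sequence (Lemma 1 / Proposition 1).**
Suppose `f_ρ ∈ L1^r` with norm at most `B`, witnessed by `h_ρ = ∑ a i • D i` with
`∑ |a i| ≤ B` and `‖f_ρ - h_ρ‖_∞ ≤ B n^{-r}`.  Let `f* 0 = 0` and, for `k ≥ 1`,
`f* k = (1 - 1/k) f* (k-1) + ((∑ |a i| ‖D i‖_ρ) / k) g* k`, where `g* k` maximizes
`⟨h_ρ - (1 - 1/k) f* (k-1), g⟩_ρ` over the symmetrized normalized dictionary.  Then for every
`k ≥ 1`, `E(f* k) - E(f_ρ) = ‖f* k - f_ρ‖_ρ² ≤ B² (k^{-1/2} + n^{-r})²`. -/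
theorem relaxed_greedy_approximation_error
    {X : Type} [MetricSpace X] [CompactSpace X] [MeasurableSpace X] [BorelSpace X]
    (ρ : Measure (X × ℝ)) [IsProbabilityMeasure ρ]
    (M : ℝ) (hM : 0 < M) (hy : ∀ᵐ p ∂ρ, |p.2| ≤ M)
    (fρ : X → ℝ)
    (hreg : (fun p : X × ℝ => fρ p.1) =ᵐ[ρ]
      ρ[(fun p : X × ℝ => p.2)|MeasurableSpace.comap (Prod.fst : X × ℝ → X) inferInstance])
    (n : ℕ) (hn : 0 < n) (D : Fin n → X → ℝ)
    (hDcont : ∀ i, Continuous (D i)) (hDbd : ∀ i x, |D i x| ≤ 1)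
    (hDpos : ∀ i, 0 < normRho (ρ.map Prod.fst) (D i))
    (r B : ℝ) (hr : 0 < r) (hB : 0 < B)
    (a : Fin n → ℝ) (ha : ∑ i, |a i| ≤ B)
    (happrox : ∀ x, |fρ x - ∑ i, a i * D i x| ≤ B * (n : ℝ) ^ (-r))
    (fstar gstar : ℕ → X → ℝ) (hf0 : fstar 0 = 0)
    (hstep : ∀ k : ℕ, 1 ≤ k →
      gstar k ∈ symDict (ρ.map Prod.fst) D ∧
      (∀ g ∈ symDict (ρ.map Prod.fst) D,
        innerRho (ρ.map Prod.fst)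
            (fun x => (∑ i, a i * D i x) - (1 - 1 / (k : ℝ)) * fstar (k - 1) x) g ≤
          innerRho (ρ.map Prod.fst)
            (fun x => (∑ i, a i * D i x) - (1 - 1 / (k : ℝ)) * fstar (k - 1) x) (gstar k)) ∧
      fstar k = fun x => (1 - 1 / (k : ℝ)) * fstar (k - 1) x +
        ((∑ i, |a i| * normRho (ρ.map Prod.fst) (D i)) / (k : ℝ)) * gstar k x) :
    ∀ k : ℕ, 1 ≤ k →
      genErr ρ (fstar k) - genErr ρ fρ =
          normRho (ρ.map Prod.fst) (fun x => fstar k x - fρ x) ^ 2 ∧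
      normRho (ρ.map Prod.fst) (fun x => fstar k x - fρ x) ^ 2 ≤
          B ^ 2 * ((k : ℝ) ^ (-(1 / 2 : ℝ)) + (n : ℝ) ^ (-r)) ^ 2 := by
  classical
  set μ := ρ.map Prod.fst with hμ
  have : IsProbabilityMeasure μ := Measure.isProbabilityMeasure_map measurable_fst.aemeasurable
  have hbr : 0 ≤ B * (n : ℝ) ^ (-r) := by positivity
  set L := ContinuousMap.toLp (E := ℝ) 2 μ ℝ with hL
  have hLae : ∀ F : C(X, ℝ), L F =ᵐ[μ] F := fun F => ContinuousMap.coeFn_toLp μ F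
  have hLn : ∀ F : C(X, ℝ), normRho μ F = ‖L F‖ := fun F => rga_normRho_eq μ F _ (hLae F)
  have hLi : ∀ F G : C(X, ℝ), innerRho μ F G = inner ℝ (L F) (L G) := by
    intro F G
    rw [innerRho, L2.inner_def]
    apply integral_congr_ae
    filter_upwards [hLae F, hLae G] with x h1 h2
    rw [h1, h2]
    simp [mul_comm]
  set d : Fin n → C(X, ℝ) := fun i => ⟨D i, hDcont i⟩ with hd
  have hdn : ∀ i, normRho μ (D i) = ‖L (d i)‖ := fun i => hLn (d i)
  have hdpos : ∀ i, 0 < ‖L (d i)‖ := fun i => hdn i ▸ hDpos i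
  set h : C(X, ℝ) := ∑ i, a i • d i with hh
  have hhx : ∀ x, h x = ∑ i, a i * D i x := by
    intro x; simp [hh, hd, ContinuousMap.sum_apply]
  have hLle : ∀ f : X → ℝ, ∀ C : ℝ, 0 ≤ C → (∀ x, |f x| ≤ C) → normRho μ f ≤ C := by
    intro f C hC hfC
    rw [normRho, Real.sqrt_le_left hC, innerRho]
    have := norm_integral_le_of_norm_le_const (μ := μ) (f := fun x => f x * f x) (C := C ^ 2)
      (ae_of_all _ fun x => by
        rw [norm_mul, ← sq]; exact pow_le_pow_left₀ (norm_nonneg _) (hfC x) 2)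
    simpa using (le_abs_self _).trans this
  set A := ∑ i, |a i| * normRho μ (D i) with hA
  have hA0 : 0 ≤ A := Finset.sum_nonneg fun i _ => mul_nonneg (abs_nonneg _) (hDpos i).le
  have hAB : A ≤ B := by
    refine le_trans (Finset.sum_le_sum fun i _ => ?_) ha
    exact mul_le_of_le_one_right (abs_nonneg _) (hLle _ 1 zero_le_one (hDbd i))
  -- continuous versions of the iterates
  have hg : ∀ k, 1 ≤ k → ∃ G : C(X, ℝ), gstar k = G ∧ ‖L G‖ = 1 := by
    intro k hk
    obtain ⟨i, hi | hi⟩ := (hstep k hk).1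
    · refine ⟨(‖L (d i)‖)⁻¹ • d i, ?_, ?_⟩
      · rw [hi, hdn]; funext x; simp [hd, div_eq_inv_mul]
      · rw [map_smul, norm_smul, norm_inv, norm_norm, inv_mul_cancel₀ (hdpos i).ne']
    · refine ⟨-((‖L (d i)‖)⁻¹ • d i), ?_, ?_⟩
      · rw [hi, hdn]; funext x; simp [hd, div_eq_inv_mul]
      · rw [map_neg, norm_neg, map_smul, norm_smul, norm_inv, norm_norm,
          inv_mul_cancel₀ (hdpos i).ne']
  have hF : ∀ k, ∃ F : C(X, ℝ), fstar k = F := by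
    intro k
    induction k with
    | zero => exact ⟨0, by rw [hf0]; rfl⟩
    | succ m ih =>
      obtain ⟨F, hF⟩ := ih
      obtain ⟨G, hG, -⟩ := hg (m + 1) (by omega)
      rw [(hstep (m + 1) (by omega)).2.2, Nat.add_sub_cancel, hF, hG]
      exact ⟨(1 - 1 / ((m + 1 : ℕ) : ℝ)) • F + (A / ((m + 1 : ℕ) : ℝ)) • G, by
        funext x; simp⟩
  choose F hF using hF
  have hrec : ∀ k : ℕ, 1 ≤ k → ‖L h - L (F k)‖ ^ 2 ≤
      (1 - 1 / (k : ℝ)) ^ 2 * ‖L h - L (F (k - 1))‖ ^ 2 + A ^ 2 / (k : ℝ) ^ 2 := by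
    intro k hk
    obtain ⟨G, hG, hG1⟩ := hg k hk
    obtain ⟨-, hmax, hfk⟩ := hstep k hk
    have hFk : F k = (1 - 1 / (k : ℝ)) • F (k - 1) + (A / (k : ℝ)) • G := by
      ext x
      rw [← hF k, hfk, hF (k - 1), hG]
      simp
    have he : (fun x => (∑ i, a i * D i x) - (1 - 1 / (k : ℝ)) * fstar (k - 1) x) =
        (h - (1 - 1 / (k : ℝ)) • F (k - 1) : C(X, ℝ)) := by
      funext x
      simp [hhx, hF (k - 1)]
    rw [he, hG, hLi] at hmax
    rw [hFk, map_add, map_smul, map_smul]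
    refine rga_step _ _ _ A k (by exact_mod_cast hk) hG1 ?_
    rw [map_sub, map_smul] at hmax
    set e := L h - (1 - 1 / (k : ℝ)) • L (F (k - 1)) with hedef
    have hsym : ∀ i, |inner ℝ e (L (d i))| ≤ ‖L (d i)‖ * inner ℝ e (L G) := by
      intro i
      have e1 : (fun x => D i x / normRho μ (D i)) = ((‖L (d i)‖)⁻¹ • d i : C(X, ℝ)) := by
        rw [hdn]; funext x; simp [hd, div_eq_inv_mul]
      have e2 : (fun x => -(D i x) / normRho μ (D i)) = (-((‖L (d i)‖)⁻¹ • d i) : C(X, ℝ)) := by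
        rw [hdn]; funext x; simp [hd, div_eq_inv_mul]
      have h1 := hmax _ ⟨i, Or.inl rfl⟩
      have h2 := hmax _ ⟨i, Or.inr rfl⟩
      rw [e1, hLi, map_smul, map_sub, map_smul, ← hedef, inner_smul_right] at h1
      rw [e2, hLi, map_neg, map_smul, map_sub, map_smul, ← hedef, inner_neg_right,
        inner_smul_right] at h2
      rw [inv_mul_le_iff₀ (hdpos i)] at h1
      rw [← mul_neg, inv_mul_le_iff₀ (hdpos i)] at h2
      exact abs_le'.2 ⟨h1, h2⟩
    rw [hh, map_sum, inner_sum, hA, Finset.sum_mul]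
    refine Finset.sum_le_sum fun i _ => ?_
    rw [map_smul, inner_smul_right, hdn, mul_assoc]
    refine (le_abs_self _).trans ?_
    rw [abs_mul]
    exact mul_le_mul_of_nonneg_left (hsym i) (abs_nonneg _)
  have hrate := rga_rate A (fun k => ‖L h - L (F k)‖ ^ 2) hrec
  have hfC : ∀ x, |fρ x| ≤ ‖h‖ + B * (n : ℝ) ^ (-r) := by
    intro x
    have h1 := happrox x
    rw [← hhx] at h1
    have h2 : |h x| ≤ ‖h‖ := h.norm_coe_le_norm x
    have h3 : |fρ x| ≤ |h x| + |fρ x - h x| := by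
      simpa using abs_add_le (h x) (fρ x - h x)
    linarith
  intro k hk
  refine ⟨?_, ?_⟩
  · refine rga_genErr ρ M hy fρ hreg _ hfC (fstar k) ?_ ‖F k‖ ?_
    · rw [hF k]; exact (F k).continuous.measurable
    · intro x; rw [hF k]; exact (F k).norm_coe_le_norm x
  · have hmem : MemLp fρ 2 μ :=
      (memLp_top_of_bound (rga_aesm ρ fρ hreg) _ (ae_of_all _ hfC)).mono_exponent le_top
    set v := hmem.toLp fρ with hv
    have hvae : v =ᵐ[μ] fρ := hmem.coeFn_toLp
    have n1 : normRho μ (fun x => fstar k x - fρ x) = ‖L (F k) - v‖ := by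
      apply rga_normRho_eq
      filter_upwards [Lp.coeFn_sub (L (F k)) v, hLae (F k), hvae] with x h1 h2 h3
      rw [h1, Pi.sub_apply, h2, h3, hF k]
    have n2 : normRho μ (fun x => fρ x - h x) = ‖v - L h‖ := by
      apply rga_normRho_eq
      filter_upwards [Lp.coeFn_sub v (L h), hLae h, hvae] with x h1 h2 h3
      rw [h1, Pi.sub_apply, h2, h3]
    have b2 : ‖v - L h‖ ≤ B * (n : ℝ) ^ (-r) := by
      rw [← n2]
      exact hLle _ _ hbr fun x => by rw [hhx]; exact happrox x
    have hk0 : (0 : ℝ) < k := by exact_mod_cast hk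
    have b1 : ‖L h - L (F k)‖ ≤ B * (k : ℝ) ^ (-(1 / 2 : ℝ)) := by
      refine (sq_le_sq₀ (norm_nonneg _) (by positivity)).1 ?_
      refine (hrate k hk).trans ?_
      have : ((k : ℝ) ^ (-(1 / 2 : ℝ))) ^ 2 = (k : ℝ)⁻¹ := by
        rw [← Real.rpow_natCast, ← Real.rpow_mul hk0.le]
        norm_num [Real.rpow_neg_one]
      rw [mul_pow, this, div_eq_mul_inv]
      gcongr
    rw [n1, ← mul_pow]
    refine pow_le_pow_left₀ (norm_nonneg _) ?_ 2
    have : ‖L (F k) - v‖ ≤ ‖L h - L (F k)‖ + ‖v - L h‖ := by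
      rw [norm_sub_rev (L h), norm_sub_rev v]
      exact norm_sub_le_norm_sub_add_norm_sub _ _ _
    rw [mul_add]
    linarith
end
end

section
/- Let H be a real Hilbert space and g_1, …, g_n ∈ H nonzero vectors. Let h = Σ_{i=1}^n a_i g_i and set B̃ = Σ_{i=1}^n |a_i| ‖g_i‖. Define f_0 = 0 and, for k ≥ 1, f_k = (1 − 1/k) f_{k−1} + (B̃/k) g_k*, where g_k* is chosen to maximize ⟨h − (1 − 1/k) f_{k−1}, g⟩ over the finite set { ± g_i/‖g_i‖ : 1 ≤ i ≤ n }. Then for every k ≥ 1, ‖h − f_k‖ ≤ B̃ k^{-1/2}. -/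
open scoped RealInnerProductSpace
open Finset

/-- **Relaxed greedy algorithm convergence in a Hilbert space.**
Let `g 1, …, g n` be nonzero vectors in a real Hilbert space, `h = ∑ a i • g i`, and
`B̃ = ∑ |a i| * ‖g i‖`.  The relaxed greedy iteration `f 0 = 0`,
`f k = (1 - 1/k) • f (k-1) + (B̃/k) • gstar k`, where `gstar k` maximizes the inner product with
`h - (1 - 1/k) • f (k-1)` over the symmetrized normalized dictionary `{± g i / ‖g i‖}`,
satisfies `‖h - f k‖ ≤ B̃ * k ^ (-1/2)` for every `k ≥ 1`. -/
theorem relaxed_greedy_hilbert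
    {H : Type*} [NormedAddCommGroup H] [InnerProductSpace ℝ H] [CompleteSpace H]
    {n : ℕ} (g : Fin n → H) (hg : ∀ i, g i ≠ 0) (a : Fin n → ℝ)
    (h : H) (hh : h = ∑ i, a i • g i)
    (Btil : ℝ) (hBtil : Btil = ∑ i, |a i| * ‖g i‖)
    (f gstar : ℕ → H) (hf0 : f 0 = 0)
    (hstep : ∀ k : ℕ, 1 ≤ k →
      gstar k ∈ {v : H | ∃ i, v = ‖g i‖⁻¹ • g i ∨ v = -(‖g i‖⁻¹ • g i)} ∧
      (∀ v ∈ {v : H | ∃ i, v = ‖g i‖⁻¹ • g i ∨ v = -(‖g i‖⁻¹ • g i)},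
        ⟪h - (1 - 1 / (k : ℝ)) • f (k - 1), v⟫ ≤ ⟪h - (1 - 1 / (k : ℝ)) • f (k - 1), gstar k⟫) ∧
      f k = (1 - 1 / (k : ℝ)) • f (k - 1) + (Btil / (k : ℝ)) • gstar k) :
    ∀ k : ℕ, 1 ≤ k → ‖h - f k‖ ≤ Btil * (k : ℝ) ^ (-(1 / 2 : ℝ)) := by
  have hB : 0 ≤ Btil := by rw [hBtil]; positivity
  have key : ∀ k : ℕ, (k : ℝ) ^ 2 * ‖h - f k‖ ^ 2 ≤ k * Btil ^ 2 := by
    intro k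
    induction k with
    | zero => simp
    | succ k ih =>
      obtain ⟨hmem, hmax, hf⟩ := hstep (k + 1) (by omega)
      simp only [Nat.add_sub_cancel] at hmax hf
      have hnorm : ‖gstar (k + 1)‖ = 1 := by
        obtain ⟨i, hi | hi⟩ := hmem
        · rw [hi, norm_smul, norm_inv, norm_norm, inv_mul_cancel₀ (norm_ne_zero_iff.2 (hg i))]
        · rw [hi, norm_neg, norm_smul, norm_inv, norm_norm,
            inv_mul_cancel₀ (norm_ne_zero_iff.2 (hg i))]
      set G := gstar (k + 1) with hG
      set r := h - (1 - 1 / ((k + 1 : ℕ) : ℝ)) • f k with hr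
      have hk : (0 : ℝ) < (k : ℝ) + 1 := by positivity
      have hrh : ⟪r, h⟫ ≤ Btil * ⟪r, G⟫ := by
        rw [hBtil, Finset.sum_mul]
        nth_rewrite 1 [hh]
        rw [inner_sum]
        refine Finset.sum_le_sum fun i _ => ?_
        have hgi : 0 < ‖g i‖ := norm_pos_iff.2 (hg i)
        have h1 := hmax _ ⟨i, Or.inl rfl⟩
        have h2 := hmax _ ⟨i, Or.inr rfl⟩
        rw [inner_neg_right] at h2
        rw [inner_smul_right] at h1 h2
        have h3 : |⟪r, g i⟫| ≤ ‖g i‖ * ⟪r, G⟫ := by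
          rw [← div_le_iff₀' hgi, div_eq_inv_mul, ← abs_of_pos (inv_pos.2 hgi), ← abs_mul]
          exact abs_le'.2 ⟨h1, h2⟩
        rw [inner_smul_right]
        calc a i * ⟪r, g i⟫ ≤ |a i| * |⟪r, g i⟫| := by rw [← abs_mul]; exact le_abs_self _
          _ ≤ |a i| * (‖g i‖ * ⟪r, G⟫) := by gcongr
          _ = _ := by ring
      have e1 : ((k : ℝ) + 1) • (h - f (k + 1)) = ((k : ℝ) + 1) • r - Btil • G := by
        rw [hf, hr]
        push_cast
        match_scalars <;> field_simp
      have e2 : (k : ℝ) • (h - f k) = ((k : ℝ) + 1) • r - h := by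
        rw [hr]
        push_cast
        match_scalars <;> field_simp <;> ring
      have n1 : ((k : ℝ) + 1) ^ 2 * ‖h - f (k + 1)‖ ^ 2
          = ((k : ℝ) + 1) ^ 2 * ‖r‖ ^ 2 - 2 * (((k : ℝ) + 1) * (Btil * ⟪r, G⟫)) + Btil ^ 2 := by
        have := congrArg (fun x => ‖x‖ ^ 2) e1
        simp only [norm_sub_sq_real (((k : ℝ) + 1) • r), norm_smul, mul_pow, hnorm,
          Real.norm_eq_abs, sq_abs, real_inner_smul_left, real_inner_smul_right] at this
        rw [this]; ring
      have n2 : (k : ℝ) ^ 2 * ‖h - f k‖ ^ 2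
          = ((k : ℝ) + 1) ^ 2 * ‖r‖ ^ 2 - 2 * (((k : ℝ) + 1) * ⟪r, h⟫) + ‖h‖ ^ 2 := by
        have := congrArg (fun x => ‖x‖ ^ 2) e2
        simp only [norm_sub_sq_real (((k : ℝ) + 1) • r), norm_smul, mul_pow,
          Real.norm_eq_abs, sq_abs, real_inner_smul_left] at this
        rw [this]
      have h5 := mul_le_mul_of_nonneg_left hrh hk.le
      push_cast
      nlinarith [sq_nonneg ‖h‖]
  intro k hk
  have hk0 : (0 : ℝ) < k := by exact_mod_cast hk
  refine (sq_le_sq₀ (norm_nonneg _) (by positivity)).1 ?_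
  have hp : ((k : ℝ) ^ (-(1 / 2 : ℝ))) ^ 2 = (k : ℝ)⁻¹ := by
    rw [← Real.rpow_natCast, ← Real.rpow_mul hk0.le]
    norm_num [Real.rpow_neg_one]
  rw [mul_pow, hp, ← div_eq_mul_inv, le_div_iff₀ hk0]
  have := key k
  refine le_of_mul_le_mul_left ?_ hk0
  linarith
end

section
/- Let 0 < δ ≤ 1/2. There is an absolute constant C > 0 such that any run of the δ-TOGL algorithm terminates after selecting at most C δ^{-2} log(1/δ) atoms; that is, the output f_z^δ lies in the span of at most C δ^{-2} log(1/δ) dictionary atoms. -/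
noncomputable section

/-- Empirical inner product `⟨u, v⟩_m = (1/m) ∑ u i * v i` on a sample of size `m`. -/
def empInner (m : ℕ) (u v : Fin m → ℝ) : ℝ := (1 / (m : ℝ)) * ∑ i, u i * v i

/-- Empirical norm `‖u‖_m`. -/
def empNorm (m : ℕ) (u : Fin m → ℝ) : ℝ := Real.sqrt (empInner m u u)

/-- Evaluation of a function at the sample inputs. -/
def evalVec {X : Type*} {m : ℕ} (z : Fin m → X × ℝ) (f : X → ℝ) : Fin m → ℝ :=
  fun i => f (z i).1

/-- The data values `y` viewed as a function on the sample points. -/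
def yVec {X : Type*} {m : ℕ} (z : Fin m → X × ℝ) : Fin m → ℝ := fun i => (z i).2

/-- A run of the thresholding orthogonal greedy algorithm of length `k`: `f 0 = 0`; for
`j ≤ k`, `f j` belongs to the span of the first `j` selected atoms and its evaluation vector is
the orthogonal projection (w.r.t. the empirical inner product) of `y` onto the span of their
evaluation vectors; and for `j < k` the atom selected at step `j` passes the `δ`-greedy
threshold `|⟨r_j, g⟩_m| ≥ δ ‖r_j‖_m` for the residual `r_j = y - f j`. -/
def IsTOGLChain {X : Type*} {m n : ℕ} (z : Fin m → X × ℝ) (D : Fin n → X → ℝ) (δ : ℝ)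
    (k : ℕ) (sel : ℕ → Fin n) (f : ℕ → X → ℝ) : Prop :=
  f 0 = 0 ∧
  (∀ j, j ≤ k →
    f j ∈ Submodule.span ℝ ((fun i => D (sel i)) '' {i : ℕ | i < j}) ∧
    ∀ w ∈ Submodule.span ℝ ((fun i => evalVec z (D (sel i))) '' {i : ℕ | i < j}),
      empInner m (yVec z - evalVec z (f j)) w = 0) ∧
  (∀ j, j < k →
    δ * empNorm m (yVec z - evalVec z (f j)) ≤
      |empInner m (yVec z - evalVec z (f j)) (evalVec z (D (sel j)))|)

/-- The stopping criterion of the `δ`-TOGL algorithm at the current estimator `f`: either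
`max_{g ∈ D_n} |⟨r, g⟩_m| ≤ δ ‖r‖_m` for the residual `r = y - f`, or `‖r‖_m ≤ δ ‖y‖_m`. -/
def DeltaStop {X : Type*} {m n : ℕ} (z : Fin m → X × ℝ) (D : Fin n → X → ℝ) (δ : ℝ)
    (f : X → ℝ) : Prop :=
  (∀ i : Fin n, |empInner m (yVec z - evalVec z f) (evalVec z (D i))| ≤
      δ * empNorm m (yVec z - evalVec z f)) ∨
    empNorm m (yVec z - evalVec z f) ≤ δ * empNorm m (yVec z)

lemma empInner_sub_left' (m : ℕ) (u v w : Fin m → ℝ) :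
    empInner m (u - v) w = empInner m u w - empInner m v w := by
  simp only [empInner, Pi.sub_apply, sub_mul, Finset.sum_sub_distrib, mul_sub]

lemma empInner_comm' (m : ℕ) (u v : Fin m → ℝ) : empInner m u v = empInner m v u := by
  simp only [empInner, mul_comm]

lemma empInner_self_nonneg' (m : ℕ) (u : Fin m → ℝ) : 0 ≤ empInner m u u := by
  unfold empInner
  exact mul_nonneg (by positivity) (Finset.sum_nonneg fun i _ => mul_self_nonneg _)

lemma empInner_sq_le' (m : ℕ) (u v : Fin m → ℝ) :
    empInner m u v ^ 2 ≤ empInner m u u * empInner m v v := by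
  have h := Finset.sum_mul_sq_le_sq_mul_sq Finset.univ u v
  have h2 := mul_le_mul_of_nonneg_left h (sq_nonneg (1 / (m : ℝ)))
  simp only [empInner, ← pow_two]
  nlinarith [h2]

lemma empNorm_sq' (m : ℕ) (u : Fin m → ℝ) : empNorm m u ^ 2 = empInner m u u :=
  Real.sq_sqrt (empInner_self_nonneg' m u)

lemma empNorm_nonneg' (m : ℕ) (u : Fin m → ℝ) : 0 ≤ empNorm m u := Real.sqrt_nonneg _

lemma evalVec_mem_span {X : Type*} {m : ℕ} (z : Fin m → X × ℝ) (g : ℕ → X → ℝ) (S : Set ℕ)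
    (f : X → ℝ) (hf : f ∈ Submodule.span ℝ (g '' S)) :
    evalVec z f ∈ Submodule.span ℝ ((fun i => evalVec z (g i)) '' S) := by
  let L : (X → ℝ) →ₗ[ℝ] (Fin m → ℝ) :=
    { toFun := evalVec z
      map_add' := fun _ _ => rfl
      map_smul' := fun _ _ => rfl }
  have h := Submodule.mem_map_of_mem (f := L) hf
  rw [Submodule.map_span, Set.image_image] at h
  exact h

lemma chain_step {X : Type*} {m n : ℕ} (z : Fin m → X × ℝ) (D : Fin n → X → ℝ) (δ : ℝ)
    (hδ : 0 < δ) (k : ℕ) (sel : ℕ → Fin n) (f : ℕ → X → ℝ)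
    (hD : ∀ i, empNorm m (evalVec z (D i)) ≤ 1)
    (h : IsTOGLChain z D δ k sel f) (j : ℕ) (hj : j < k) :
    empInner m (yVec z - evalVec z (f (j+1))) (yVec z - evalVec z (f (j+1))) ≤
      (1 - δ ^ 2) * empInner m (yVec z - evalVec z (f j)) (yVec z - evalVec z (f j)) := by
  obtain ⟨_, h1, h2⟩ := h
  obtain ⟨ha, hb⟩ := h1 (j+1) hj
  obtain ⟨hc, _⟩ := h1 j hj.le
  have h2 := h2 j hj
  have hgm : evalVec z (D (sel j)) ∈ Submodule.span ℝ
      ((fun i => evalVec z (D (sel i))) '' {i : ℕ | i < j + 1}) :=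
    Submodule.subset_span ⟨j, Nat.lt_succ_self j, rfl⟩
  have hcm := Submodule.span_mono (R := ℝ)
    (Set.image_mono (f := fun i => evalVec z (D (sel i)))
      (fun i (hi : i < j) => (Nat.lt_succ_of_lt hi : i < j + 1)))
    (evalVec_mem_span z (fun i => D (sel i)) {i | i < j} (f j) hc)
  have ham := evalVec_mem_span z (fun i => D (sel i)) {i | i < j + 1} (f (j+1)) ha
  have hg0 := hb _ hgm
  have hd0 := hb _ (Submodule.sub_mem _ ham hcm)
  have hgn := hD (sel j)
  have hG : empInner m (evalVec z (D (sel j))) (evalVec z (D (sel j))) ≤ 1 := by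
    rw [← empNorm_sq']
    exact pow_le_one₀ (Real.sqrt_nonneg _) hgn
  have hsq := pow_le_pow_left₀ (mul_nonneg hδ.le (empNorm_nonneg' _ _)) h2 2
  rw [mul_pow, empNorm_sq', sq_abs] at hsq
  generalize evalVec z (D (sel j)) = g at *
  generalize hr : yVec z - evalVec z (f j) = r at *
  generalize hr' : yVec z - evalVec z (f (j+1)) = r' at *
  have hd : evalVec z (f (j+1)) - evalVec z (f j) = r - r' := by
    rw [← hr, ← hr']; abel
  rw [hd] at hd0
  have cs := empInner_sq_le' m (r - r') g
  have hnn := empInner_self_nonneg' m (r - r')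
  have e1 : empInner m (r - r') g = empInner m r g := by
    rw [empInner_sub_left', hg0, sub_zero]
  have e2 : empInner m (r - r') (r - r') = empInner m r r - empInner m r' r' := by
    rw [empInner_comm', empInner_sub_left'] at hd0
    have c1 := empInner_sub_left' m r r' (r - r')
    have c2 := empInner_sub_left' m r r' r
    have c3 := empInner_sub_left' m r r' r'
    rw [empInner_comm' m r (r - r'), empInner_comm' m r' (r - r')] at c1
    rw [empInner_comm' m r' r] at c2
    linarith
  rw [e1] at cs
  have := mul_le_mul_of_nonneg_left hG hnn
  rw [e2] at this cs
  linarith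

/-- **Bound on the number of atoms selected by δ-TOGL.**
There is an absolute constant `C > 0` such that any run of the `δ`-TOGL algorithm (a threshold
greedy chain that has not met the stopping criterion before its final step) selects at most
`C δ⁻² log (1/δ)` atoms. -/
theorem deltaTOGL_atom_count :
    ∃ C : ℝ, 0 < C ∧
      ∀ (X : Type) (m n : ℕ) (z : Fin m → X × ℝ) (D : Fin n → X → ℝ),
        (∀ i, empNorm m (evalVec z (D i)) ≤ 1) →
        ∀ (δ : ℝ), 0 < δ → δ ≤ 1 / 2 →
        ∀ (k : ℕ) (sel : ℕ → Fin n) (f : ℕ → X → ℝ),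
          IsTOGLChain z D δ k sel f →
          (∀ j, j < k → ¬ DeltaStop z D δ (f j)) →
          (k : ℝ) ≤ C * (δ ^ 2)⁻¹ * Real.log (1 / δ) := by
  refine ⟨3, by norm_num, ?_⟩
  intro X m n z D hD δ hδ hδ2 k sel f h hs
  have hlog : Real.log 2 ≤ Real.log (1 / δ) := by
    apply Real.log_le_log (by norm_num)
    rw [le_div_iff₀ hδ]; linarith
  have hl2 := Real.log_two_gt_d9
  have hδsq : 0 < δ ^ 2 := by positivity
  have hδ4 : δ ^ 2 ≤ 1 / 4 := by nlinarith
  have key : (k : ℝ) * δ ^ 2 ≤ 3 * Real.log (1 / δ) := by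
    rcases k with _ | k
    · simp only [Nat.cast_zero, zero_mul]; linarith
    have hE : ∀ j, j ≤ k →
        empInner m (yVec z - evalVec z (f j)) (yVec z - evalVec z (f j)) ≤
          (1 - δ ^ 2) ^ j * empInner m (yVec z) (yVec z) := by
      intro j
      induction j with
      | zero =>
        intro _
        have : yVec z - evalVec z (f 0) = yVec z := by
          rw [h.1]; ext i; simp [evalVec]
        rw [this]; simp
      | succ j ih =>
        intro hj
        have a := chain_step z D δ hδ (k+1) sel f hD h j (by omega)
        have b := mul_le_mul_of_nonneg_left (ih (by omega))
          (by linarith : (0:ℝ) ≤ 1 - δ ^ 2)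
        rw [pow_succ]
        linarith
    have hk := hE k le_rfl
    have hn := hs k (Nat.lt_succ_self k)
    have hn2 : δ * empNorm m (yVec z) < empNorm m (yVec z - evalVec z (f k)) := by
      by_contra hc
      exact hn (Or.inr (not_lt.mp hc))
    have hsq := pow_lt_pow_left₀ hn2 (mul_nonneg hδ.le (empNorm_nonneg' _ _)) two_ne_zero
    rw [mul_pow, empNorm_sq', empNorm_sq'] at hsq
    have hlt := lt_of_mul_lt_mul_right (hsq.trans_le hk) (empInner_self_nonneg' m (yVec z))
    have hexp : (1 - δ ^ 2) ^ k ≤ Real.exp (k * (-δ ^ 2)) := by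
      rw [Real.exp_nat_mul]
      apply pow_le_pow_left₀ (by linarith)
      have := Real.add_one_le_exp (-δ ^ 2)
      linarith
    have hl := Real.log_lt_log hδsq (hlt.trans_le hexp)
    rw [Real.log_exp, Real.log_pow] at hl
    rw [one_div, Real.log_inv] at hlog ⊢
    push_cast at hl ⊢
    linarith
  rw [mul_right_comm, ← div_eq_mul_inv, le_div_iff₀ hδsq]
  exact key
end
end

section
/- Let H be a real inner product space, δ > 0, D ⊂ H a finite set, and y, f ∈ H such that ⟨y − f, f⟩ = 0 and |⟨y − f, g⟩| ≤ δ ‖y − f‖ for every g ∈ D. Then for every h = Σ_{g∈D} a_g g with real coefficients a_g, ‖y − f‖ ≤ ‖y − h‖ + δ Σ_{g∈D} |a_g|. -/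
open scoped RealInnerProductSpace
open Finset

/-- **Residual bound under the δ-greedy threshold failure condition.**
In a real inner product space, if `⟨y - f, f⟩ = 0` and no dictionary atom `g ∈ D` passes the
`δ`-greedy threshold for the residual `y - f` (i.e. `|⟨y - f, g⟩| ≤ δ ‖y - f‖`), then for every
`h = ∑_{g ∈ D} a_g • g` one has `‖y - f‖ ≤ ‖y - h‖ + δ * ∑_{g ∈ D} |a_g|`. -/
theorem residual_bound_of_threshold_fail
    {H : Type*} [NormedAddCommGroup H] [InnerProductSpace ℝ H]
    (δ : ℝ) (hδ : 0 < δ) (D : Finset H) (y f : H)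
    (horth : ⟪y - f, f⟫ = 0)
    (hthresh : ∀ g ∈ D, |⟪y - f, g⟫| ≤ δ * ‖y - f‖) :
    ∀ a : H → ℝ, ‖y - f‖ ≤ ‖y - ∑ g ∈ D, a g • g‖ + δ * ∑ g ∈ D, |a g| := by
  intro a
  have h1 : ⟪y - f, ∑ g ∈ D, a g • g⟫ ≤ ‖y - f‖ * (δ * ∑ g ∈ D, |a g|) := by
    rw [inner_sum, Finset.mul_sum, Finset.mul_sum]
    refine Finset.sum_le_sum fun g hg => ?_
    rw [real_inner_smul_right]
    calc a g * ⟪y - f, g⟫ ≤ |a g * ⟪y - f, g⟫| := le_abs_self _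
      _ = |a g| * |⟪y - f, g⟫| := abs_mul _ _
      _ ≤ |a g| * (δ * ‖y - f‖) := mul_le_mul_of_nonneg_left (hthresh g hg) (abs_nonneg _)
      _ = ‖y - f‖ * (δ * |a g|) := by ring
  have h2 := real_inner_le_norm (y - f) (y - ∑ g ∈ D, a g • g)
  have h3 : ‖y - f‖ * ‖y - f‖ = ⟪y - f, y - ∑ g ∈ D, a g • g⟫ + ⟪y - f, ∑ g ∈ D, a g • g⟫ := by
    rw [← inner_add_right, sub_add_cancel, ← real_inner_self_eq_norm_mul_norm,
      inner_sub_right (y - f) y f, horth, sub_zero]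
  rcases (norm_nonneg (y - f)).eq_or_lt with h0 | h0
  · rw [← h0]
    have : 0 ≤ ∑ g ∈ D, |a g| := Finset.sum_nonneg fun _ _ => abs_nonneg _
    positivity
  · refine le_of_mul_le_mul_left ?_ h0
    rw [mul_add]
    linarith
end
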